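/- Let C be a 2D elasticity tensor. Then its harmonic part H(C) is a 2D harmonic fourth-order tensor, i.e. H(C) is invariant under all permutations of its four indices and satisfies Σₖ H(C) k k i j = 0 for all i, j. Consequently C admits the harmonic decomposition C i j k l = 2μ(C)·J i j k l + κ(C)·δ i j · δ k l + ½(δ i j · d'(C) k l + d'(C) i j · δ k l) + H(C) i j k l. -/

import Mathlib

open Finset

noncomputable section

/-- A fourth-order tensor on `ℝ²`. -/
abbrev Tens4 := Fin 2 → Fin 2 → Fin 2 → Fin 2 → ℝ

/-- Kronecker delta on `Fin 2`. -/
def kdelta (i j : Fin 2) : ℝ := if i = j then 1 else 0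

/-- The isotropic fourth-order tensor `J`. -/
def Jten (i j k l : Fin 2) : ℝ :=
  (kdelta i k * kdelta j l + kdelta i l * kdelta j k) / 2 - kdelta i j * kdelta k l / 2

/-- A 2D elasticity tensor: minor and major index symmetries. -/
def IsElas (C : Tens4) : Prop :=
  (∀ i j k l, C i j k l = C j i k l) ∧ (∀ i j k l, C i j k l = C i j l k) ∧
    (∀ i j k l, C i j k l = C k l i j)

/-- Dilatation tensor `d(C)ᵢⱼ = Σₖ C k k i j`. -/
def dil (C : Tens4) (i j : Fin 2) : ℝ := ∑ k, C k k i j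

/-- Voigt tensor `v(C)ᵢⱼ = Σₖ C k i k j`. -/
def voigt (C : Tens4) (i j : Fin 2) : ℝ := ∑ k, C k i k j

/-- Shear modulus `μ(C)`. -/
def muC (C : Tens4) : ℝ := (2 * ∑ i, voigt C i i - ∑ i, dil C i i) / 8

/-- 2D bulk modulus `κ(C)`. -/
def kappaC (C : Tens4) : ℝ := (∑ i, dil C i i) / 4

/-- Deviatoric part `d'(C)` of the dilatation tensor. -/
def devC (C : Tens4) (i j : Fin 2) : ℝ := dil C i j - (∑ k, dil C k k) / 2 * kdelta i j

/-- Harmonic (fourth-order) part `H(C)` of the elasticity tensor. -/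
def harmC (C : Tens4) (i j k l : Fin 2) : ℝ :=
  C i j k l - 2 * muC C * Jten i j k l - kappaC C * kdelta i j * kdelta k l
    - (kdelta i j * devC C k l + devC C i j * kdelta k l) / 2

/-- A 2D harmonic fourth-order tensor: totally symmetric (invariant under all
permutations of its four indices) and traceless. -/
def IsHarmonic (H : Tens4) : Prop :=
  (∀ (σ : Equiv.Perm (Fin 4)) (v : Fin 4 → Fin 2),
      H (v (σ 0)) (v (σ 1)) (v (σ 2)) (v (σ 3)) = H (v 0) (v 1) (v 2) (v 3)) ∧
    (∀ i j : Fin 2, ∑ k, H k k i j = 0)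

/-!
In dimension two, the only obstruction to total symmetry of an elasticity tensor is the Cauchy
relation `C₀₀₁₁ = C₀₁₀₁`. If `d(C) = 0` then `C₀₀₀₀ = -C₀₀₁₁ = C₁₁₁₁`, so that
`tr v(C) = 2 (C₀₁₀₁ - C₀₀₁₁)`: an elasticity tensor with `d(C) = 0` and `tr v(C) = 0` is harmonic.
The coefficients `μ(C)`, `κ(C)` and `d'(C)` are exactly those for which `H(C)`, again an
elasticity tensor, has `d(H(C)) = 0` and `tr v(H(C)) = 0`.
-/

theorem apply_comp_perm_eq_of_adjacent_swaps {ι α : Type*} {n : ℕ} {f : (Fin (n + 1) → ι) → α}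
    (hf : ∀ (i : Fin n) v, f (v ∘ Equiv.swap i.castSucc i.succ) = f v)
    (σ : Equiv.Perm (Fin (n + 1))) (v : Fin (n + 1) → ι) : f (v ∘ σ) = f v := by
  have hσ : σ ∈ Submonoid.closure (Set.range fun i : Fin n => Equiv.swap i.castSucc i.succ) := by
    simp only [Equiv.Perm.mclosure_swap_castSucc_succ, Submonoid.mem_top]
  induction hσ using Submonoid.closure_induction generalizing v with
  | mem _ hx =>
    obtain ⟨i, rfl⟩ := hx
    exact hf i v
  | one => rfl
  | mul σ τ _ _ ihσ ihτ => exact (ihτ (v ∘ σ)).trans (ihσ v)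

theorem apply_perm_four_eq {ι α : Type*} {T : ι → ι → ι → ι → α}
    (h₀₁ : ∀ i j k l, T i j k l = T j i k l) (h₁₂ : ∀ i j k l, T i j k l = T i k j l)
    (h₂₃ : ∀ i j k l, T i j k l = T i j l k) (σ : Equiv.Perm (Fin 4)) (v : Fin 4 → ι) :
    T (v (σ 0)) (v (σ 1)) (v (σ 2)) (v (σ 3)) = T (v 0) (v 1) (v 2) (v 3) := by
  refine apply_comp_perm_eq_of_adjacent_swaps (f := fun w => T (w 0) (w 1) (w 2) (w 3))
    (fun i w => ?_) σ v
  fin_cases i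
  · exact h₀₁ (w 1) (w 0) (w 2) (w 3)
  · exact h₁₂ (w 0) (w 2) (w 1) (w 3)
  · exact h₂₃ (w 0) (w 1) (w 3) (w 2)

namespace IsElas

variable {A B C : Tens4}

theorem sub (hA : IsElas A) (hB : IsElas B) : IsElas (A - B) :=
  ⟨fun i j k l => congrArg₂ (· - ·) (hA.1 i j k l) (hB.1 i j k l),
    fun i j k l => congrArg₂ (· - ·) (hA.2.1 i j k l) (hB.2.1 i j k l),
    fun i j k l => congrArg₂ (· - ·) (hA.2.2 i j k l) (hB.2.2 i j k l)⟩

theorem smul (c : ℝ) (hA : IsElas A) : IsElas (c • A) :=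
  ⟨fun i j k l => congrArg (c * ·) (hA.1 i j k l),
    fun i j k l => congrArg (c * ·) (hA.2.1 i j k l),
    fun i j k l => congrArg (c * ·) (hA.2.2 i j k l)⟩

theorem swap_middle_of_cauchy (hC : IsElas C) (hcauchy : C 0 0 1 1 = C 0 1 0 1)
    (i j k l : Fin 2) : C i j k l = C i k j l := by
  obtain ⟨hleft, hright, hmajor⟩ := hC
  rcases eq_or_ne j k with rfl | hjk
  · rfl
  rcases eq_or_ne i l with rfl | hil
  · calc C i j k i = C k i i j := hmajor i j k i
      _ = C i k i j := hleft k i i j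
      _ = C i k j i := hright i k i j
  have hcauchy' : C 1 1 0 0 = C 1 0 1 0 :=
    calc C 1 1 0 0 = C 0 0 1 1 := hmajor 1 1 0 0
      _ = C 0 1 0 1 := hcauchy
      _ = C 1 0 0 1 := hleft 0 1 0 1
      _ = C 1 0 1 0 := hright 1 0 0 1
  fin_cases i <;> fin_cases j <;> fin_cases k <;> fin_cases l <;> first
    | contradiction
    | exact hcauchy
    | exact hcauchy.symm
    | exact hcauchy'
    | exact hcauchy'.symm

theorem cauchy_of_traces_eq_zero (hC : IsElas C) (hdil : dil C = 0)
    (hvoigt : ∑ i, voigt C i i = 0) : C 0 0 1 1 = C 0 1 0 1 := by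
  have hdil₀ : C 0 0 0 0 + C 1 1 0 0 = 0 := by
    simpa only [dil, Fin.sum_univ_two, Pi.zero_apply] using congrFun₂ hdil 0 0
  have hdil₁ : C 0 0 1 1 + C 1 1 1 1 = 0 := by
    simpa only [dil, Fin.sum_univ_two, Pi.zero_apply] using congrFun₂ hdil 1 1
  have hvoigt' : C 0 0 0 0 + C 1 0 1 0 + (C 0 1 0 1 + C 1 1 1 1) = 0 := by
    simpa only [voigt, Fin.sum_univ_two] using hvoigt
  have hmajor : C 1 1 0 0 = C 0 0 1 1 := hC.2.2 1 1 0 0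
  have hminor : C 1 0 1 0 = C 0 1 0 1 := (hC.1 1 0 1 0).trans (hC.2.1 0 1 1 0)
  linarith

theorem isHarmonic_of_traces_eq_zero (hC : IsElas C) (hdil : dil C = 0)
    (hvoigt : ∑ i, voigt C i i = 0) : IsHarmonic C :=
  ⟨apply_perm_four_eq hC.1
      (hC.swap_middle_of_cauchy (hC.cauchy_of_traces_eq_zero hdil hvoigt)) hC.2.1,
    congrFun₂ hdil⟩

end IsElas

/-- The symmetrized tensor product `½(a ⊗ b + b ⊗ a)` of two second-order tensors. Both `δ ⊗ δ` and
the deviatoric term `½(δ ⊗ d' + d' ⊗ δ)` of the harmonic decomposition are of this form. -/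
def symProd (a b : Fin 2 → Fin 2 → ℝ) : Tens4 :=
  fun i j k l => (a i j * b k l + b i j * a k l) / 2

theorem harmC_eq_sub (C : Tens4) :
    harmC C = C - (2 * muC C) • Jten - kappaC C • symProd kdelta kdelta
      - symProd kdelta (devC C) := by
  ext i j k l
  simp only [harmC, symProd, Pi.sub_apply, Pi.smul_apply, smul_eq_mul]
  ring

theorem kdelta_comm (i j : Fin 2) : kdelta i j = kdelta j i := by
  simp only [kdelta, eq_comm]

theorem sum_kdelta_self : ∑ i, kdelta i i = 2 := by
  simp [kdelta]

theorem sum_kdelta_mul (a : Fin 2 → ℝ) (i : Fin 2) : ∑ k, kdelta k i * a k = a i := by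
  simp [kdelta]

theorem isElas_Jten : IsElas Jten := by
  refine ⟨fun i j k l => ?_, fun i j k l => ?_, fun i j k l => ?_⟩
  · rw [Jten, Jten, kdelta_comm j i]
    ring
  · rw [Jten, Jten, kdelta_comm l k]
    ring
  · rw [Jten, Jten, kdelta_comm k i, kdelta_comm l j, kdelta_comm k j, kdelta_comm l i]
    ring

theorem isElas_symProd {a b : Fin 2 → Fin 2 → ℝ} (ha : ∀ i j, a i j = a j i)
    (hb : ∀ i j, b i j = b j i) : IsElas (symProd a b) := by
  refine ⟨fun i j k l => ?_, fun i j k l => ?_, fun i j k l => ?_⟩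
  · rw [symProd, symProd, ha i j, hb i j]
  · rw [symProd, symProd, ha k l, hb k l]
  · rw [symProd, symProd]
    ring

theorem devC_comm {C : Tens4} (hC : ∀ i j k l, C i j k l = C i j l k) (i j : Fin 2) :
    devC C i j = devC C j i := by
  have hdil : dil C i j = dil C j i := Finset.sum_congr rfl fun k _ => hC k k i j
  rw [devC, devC, hdil, kdelta_comm]

theorem IsElas.harmC {C : Tens4} (hC : IsElas C) : IsElas (harmC C) := by
  rw [harmC_eq_sub]
  exact ((hC.sub (isElas_Jten.smul _)).sub
    ((isElas_symProd kdelta_comm kdelta_comm).smul _)).sub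
      (isElas_symProd kdelta_comm (devC_comm hC.2.1))

theorem sum_devC_self (C : Tens4) : ∑ i, devC C i i = 0 := by
  simp only [devC, Finset.sum_sub_distrib, ← Finset.mul_sum, sum_kdelta_self]
  ring

theorem dil_sub (A B : Tens4) : dil (A - B) = dil A - dil B := by
  ext i j
  simp only [dil, Pi.sub_apply, Finset.sum_sub_distrib]

theorem dil_smul (c : ℝ) (A : Tens4) : dil (c • A) = c • dil A := by
  ext i j
  simp only [dil, Pi.smul_apply, Finset.smul_sum]

theorem dil_symProd_kdelta (a : Fin 2 → Fin 2 → ℝ) :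
    dil (symProd kdelta a) = a + ((∑ k, a k k) / 2) • kdelta := by
  ext i j
  simp only [dil, symProd, Pi.add_apply, Pi.smul_apply, smul_eq_mul, ← Finset.sum_div,
    Finset.sum_add_distrib, ← Finset.sum_mul, sum_kdelta_self]
  ring

theorem dil_Jten : dil Jten = 0 := by
  ext i j
  simp only [dil, Jten, ← Finset.sum_div, Finset.sum_sub_distrib, Finset.sum_add_distrib,
    ← Finset.sum_mul, sum_kdelta_self, sum_kdelta_mul, Pi.zero_apply]
  rw [kdelta_comm j i]
  ring

theorem dil_harmC (C : Tens4) : dil (harmC C) = 0 := by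
  ext i j
  simp only [harmC_eq_sub, dil_sub, dil_smul, dil_Jten, dil_symProd_kdelta, sum_devC_self,
    sum_kdelta_self, Pi.sub_apply, Pi.add_apply, Pi.smul_apply, Pi.zero_apply, smul_eq_mul]
  rw [devC, kappaC]
  ring

theorem voigt_sub (A B : Tens4) : voigt (A - B) = voigt A - voigt B := by
  ext i j
  simp only [voigt, Pi.sub_apply, Finset.sum_sub_distrib]

theorem voigt_smul (c : ℝ) (A : Tens4) : voigt (c • A) = c • voigt A := by
  ext i j
  simp only [voigt, Pi.smul_apply, Finset.smul_sum]

theorem voigt_symProd_kdelta (a : Fin 2 → Fin 2 → ℝ) (i j : Fin 2) :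
    voigt (symProd kdelta a) i j = (a i j + a j i) / 2 := by
  simp only [voigt, symProd, ← Finset.sum_div, Finset.sum_add_distrib, sum_kdelta_mul,
    mul_comm (a _ _)]

theorem voigt_Jten : voigt Jten = kdelta := by
  ext i j
  simp only [voigt, Jten, ← Finset.sum_div, Finset.sum_sub_distrib, Finset.sum_add_distrib,
    ← Finset.sum_mul, sum_kdelta_self, sum_kdelta_mul]
  ring

theorem sum_voigt_harmC_self (C : Tens4) : ∑ i, voigt (harmC C) i i = 0 := by
  simp only [harmC_eq_sub, voigt_sub, voigt_smul, voigt_Jten, voigt_symProd_kdelta,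
    Pi.sub_apply, Pi.smul_apply, smul_eq_mul, add_self_div_two, Finset.sum_sub_distrib,
    ← Finset.mul_sum, sum_devC_self, sum_kdelta_self, muC, kappaC]
  ring

/-- The harmonic part `H(C)` of a 2D elasticity tensor is a 2D
harmonic fourth-order tensor, and `C` admits the harmonic decomposition
`C = 2μJ + κ δ⊗δ + ½(δ⊗d' + d'⊗δ) + H`. -/
theorem harmonic_part_isHarmonic_and_decomposition (C : Tens4) (hC : IsElas C) :
    IsHarmonic (harmC C) ∧
      ∀ i j k l, C i j k l =
        2 * muC C * Jten i j k l + kappaC C * kdelta i j * kdelta k l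
          + (kdelta i j * devC C k l + devC C i j * kdelta k l) / 2
          + harmC C i j k l := by
  refine ⟨hC.harmC.isHarmonic_of_traces_eq_zero (dil_harmC C) (sum_voigt_harmC_self C),
    fun i j k l => ?_⟩
  rw [harmC]
  ring
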